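/- arXiv:2403.13688 — 7 statements merged into one kernel-verified Lean document; each statement's English description precedes it below -/
import Mathlib

section
/- Under assumptions (A1)–(A4), if p* = 1 or d* = 1, then p* = d* = 1 and the set of maximizers of Ψ coincides with the set of minimizers of Φ; that is, (argmax_{x∈E} Ψ(x)) × {p*} = (argmin_{y∈E} Φ(y)) × {d*}. -/
/-!
The proof compares both problems with the level `1`.  Concavity and `f e0 > 0` make
`v ↦ v * f (e0 + (y - e0) / v)` strictly increasing where it is positive, so `f^{Γ,e0}(y) ≤ v`
holds as soon as this expression reaches `1` at `v` (`radTrans_le`), while `f^{Γ,e0}(y) < v` forces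
it above `1` at `v` (`one_lt_of_radTrans_lt`).  Likewise the Slater point gives
`y ∈ 𝒮 ↔ φ_𝒮 y ≤ 1` (`Assumptions.mem_feas_iff`).

Hence a feasible point with `f ≥ 1` has `Φ ≤ 1` (`Phi_le_one`); a point with `Φ < 1` is feasible
with `f > 1` (`one_le_Phi`); and, by semicontinuity, a point with `Φ ≤ 1` is feasible with `f ≥ 1`
(`limit_primal` along a constant sequence).  Together with the attained maximum at `x*` this
settles everything once `p* = 1`.

It remains that `d* = 1` forces `p* = 1`.  If `p* > 1`, then `x*` lies in the interior of the domain
because `η > 0`, and moving slightly from it towards the Slater point gives `Φ < 1`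
(`exists_Phi_lt_one`).  If `d* ≤ 1`, compactness of `S0` gives a convergent minimizing sequence for
the dual, whose limit is feasible with `f ≥ 1` (`one_le_pStar`).
-/

open Set Filter Topology Classical

noncomputable section

namespace MultiRadial

variable {E : Type*} [NormedAddCommGroup E] [InnerProductSpace ℝ E] [FiniteDimensional ℝ E]

/-- The hypograph of an extended-positive-real-valued function `f`:
`{(x,u) ∈ E × ℝ | 0 < u ≤ f x}`.  `f` is "concave" iff this set is convex. -/
def hypo (f : E → ENNReal) : Set (E × ℝ) :=
  {p : E × ℝ | 0 < p.2 ∧ ENNReal.ofReal p.2 ≤ f p.1}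

/-- The effective domain `dom f = {x | 0 < f x < ∞}`. -/
def edom (f : E → ENNReal) : Set E := {x | f x ≠ 0 ∧ f x ≠ ⊤}

/-- The radial transformation `f^{Γ,e}(y) = sup {v > 0 | v * f (e + (y-e)/v) ≤ 1}`
(with `sup ∅ = 0`). -/
def radTrans (f : E → ENNReal) (e y : E) : ENNReal :=
  ⨆ v ∈ {v : ℝ | 0 < v ∧ ENNReal.ofReal v * f (e + v⁻¹ • (y - e)) ≤ 1}, ENNReal.ofReal v

/-- The gauge of `S` with respect to `e`: `γ_{S,e}(x) = inf {v > 0 | e + (x-e)/v ∈ S}`. -/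
def gaugeFrom (S : Set E) (e x : E) : ℝ :=
  sInf {v : ℝ | 0 < v ∧ e + v⁻¹ • (x - e) ∈ S}

/-- The interior radius of `S` with respect to `e`: `R_e(S) = inf {‖x - e‖ | x ∉ S}`. -/
def innerRadius (S : Set E) (e : E) : ℝ :=
  sInf ((fun x => ‖x - e‖) '' Sᶜ)

/-- The nonstandard indicator `ι̂_S` taking value `∞` on `S` and `0` elsewhere. -/
def indic (S : Set E) (x : E) : ENNReal := if x ∈ S then ⊤ else 0

/-- The data of the multiradial setting: objective `f`, constraint sets `S j`,
a candidate convex identifier `phiS`, the objective reference point `e0`,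
a primal optimal solution `xstar`, and a Slater point `xSL`. -/
structure Setup (E : Type*) [NormedAddCommGroup E] [InnerProductSpace ℝ E] (m : ℕ) where
  f : E → ENNReal
  S : Fin m → Set E
  phiS : E → ℝ
  e0 : E
  xstar : E
  xSL : E

variable {m : ℕ}

/-- `S0 = cl (dom f)`. -/
def Setup.S0 (P : Setup E m) : Set E := closure (edom P.f)

/-- The feasible region `𝒮 = ⋂ j, S j`. -/
def Setup.feas (P : Setup E m) : Set E := ⋂ j, P.S j

/-- `D0 = D(S0)`, the diameter of `S0`. -/
def Setup.D0 (P : Setup E m) : ℝ := Metric.diam P.S0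

/-- `R0 = R_{e0}(S0)`. -/
def Setup.R0 (P : Setup E m) : ℝ := innerRadius P.S0 P.e0

/-- The primal function `Ψ(x) = min {f x, ι̂_𝒮 x}`. -/
def Setup.Psi (P : Setup E m) (x : E) : ENNReal := min (P.f x) (indic P.feas x)

/-- The primal optimal value `p* = sup Ψ`. -/
def Setup.pStar (P : Setup E m) : ENNReal := ⨆ x, P.Psi x

/-- The multiradial dual function `Φ(y) = max {f^{Γ,e0} y, φ_𝒮 y}`. -/
def Setup.Phi (P : Setup E m) (y : E) : ENNReal :=
  max (radTrans P.f P.e0 y) (ENNReal.ofReal (P.phiS y))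

/-- The dual optimal value `d* = inf Φ`. -/
def Setup.dStar (P : Setup E m) : ENNReal := ⨅ y, P.Phi y

/-- `η = (1 - γ_{S0,e0}(x*)) * (1 - φ_𝒮(x_SL))`. -/
def Setup.eta (P : Setup E m) : ℝ :=
  (1 - gaugeFrom P.S0 P.e0 P.xstar) * (1 - P.phiS P.xSL)

/-- `ρ = R0 / (D0 + R0)`. -/
def Setup.rho (P : Setup E m) : ℝ := P.R0 / (P.D0 + P.R0)

/-- The rescaled primal function `Ψ_τ(x) = min {τ * f x, ι̂_𝒮 x}`. -/
def Setup.PsiT (P : Setup E m) (τ : ℝ) (x : E) : ENNReal :=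
  min (ENNReal.ofReal τ * P.f x) (indic P.feas x)

/-- The rescaled multiradial dual function `Φ_τ(y) = max {(τ f)^{Γ,e0} y, φ_𝒮 y}`. -/
def Setup.PhiT (P : Setup E m) (τ : ℝ) (y : E) : ENNReal :=
  max (radTrans (fun x => ENNReal.ofReal τ * P.f x) P.e0 y) (ENNReal.ofReal (P.phiS y))

/-- `p(τ) = sup Ψ_τ`. -/
def Setup.pVal (P : Setup E m) (τ : ℝ) : ENNReal := ⨆ x, P.PsiT τ x

/-- `d(τ) = inf Φ_τ`. -/
def Setup.dVal (P : Setup E m) (τ : ℝ) : ENNReal := ⨅ y, P.PhiT τ y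

/-- `c_τ = (η / p(τ)) * R0 / (D0 + R0)`. -/
def Setup.cVal (P : Setup E m) (τ : ℝ) : ℝ :=
  P.eta / (P.pVal τ).toReal * (P.R0 / (P.D0 + P.R0))

/-- Standing assumptions (A1)-(A4). -/
structure Assumptions (P : Setup E m) : Prop where
  /-- (A1) `f` is concave (its hypograph is convex). -/
  concave : Convex ℝ (hypo P.f)
  /-- (A1) `f` is upper semicontinuous. -/
  usc : UpperSemicontinuous P.f
  /-- (A1) `D0 = D(S0) < ∞`. -/
  diamFin : EMetric.diam P.S0 ≠ ⊤
  /-- (A2) each `S j` is closed. -/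
  closedS : ∀ j, IsClosed (P.S j)
  /-- (A2) each `S j` is convex. -/
  convexS : ∀ j, Convex ℝ (P.S j)
  /-- (A3) the identifier is lower semicontinuous. -/
  lscId : LowerSemicontinuous P.phiS
  /-- (A3) the identifier is convex. -/
  convexId : ConvexOn ℝ Set.univ P.phiS
  /-- (A3) `int 𝒮 = {x | φ_𝒮 x < 1}`. -/
  identifies : interior P.feas = {x | P.phiS x < 1}
  /-- (A3) `e0 ∈ int S0`. -/
  e0int : P.e0 ∈ interior P.S0
  /-- (A3) `R0 > 0`. -/
  R0pos : 0 < P.R0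
  /-- (A4) `x* ∈ 𝒮`. -/
  xstarFeas : P.xstar ∈ P.feas
  /-- (A4) `f x* = p*`. -/
  xstarOpt : P.f P.xstar = P.pStar
  /-- (A4) `p* > 0`. -/
  pStarPos : 0 < P.pStar
  /-- (A4) `p* < ∞`. -/
  pStarFin : P.pStar ≠ ⊤
  /-- (A4) `x_SL ∈ int 𝒮 ∩ dom f`. -/
  slater : P.xSL ∈ interior P.feas ∩ edom P.f
  /-- (A4) `η > 0`. -/
  etaPos : 0 < P.eta

/-! ### Concavity in terms of the hypograph -/

theorem conc {f : E → ENNReal} (hf : Convex ℝ (hypo f)) {a b : E} {u w s t : ℝ}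
    (hu : 0 < u) (hw : 0 < w) (ha : ENNReal.ofReal u ≤ f a) (hb : ENNReal.ofReal w ≤ f b)
    (hs : 0 ≤ s) (ht : 0 ≤ t) (hst : s + t = 1) :
    ENNReal.ofReal (s * u + t * w) ≤ f (s • a + t • b) := by
  have h1 : ((a, u) : E × ℝ) ∈ hypo f := ⟨hu, ha⟩
  have h2 : ((b, w) : E × ℝ) ∈ hypo f := ⟨hw, hb⟩
  have := hf h1 h2 hs ht hst
  simpa using this.2

theorem exists_pos_le {c : ENNReal} (h : c ≠ 0) : ∃ u : ℝ, 0 < u ∧ ENNReal.ofReal u ≤ c := by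
  obtain ⟨r, hr, hrc⟩ := ENNReal.lt_iff_exists_nnreal_btwn.1 (pos_iff_ne_zero.2 h)
  exact ⟨r, by exact_mod_cast hr, by simpa using hrc.le⟩

/-- The positivity set `{f ≠ 0}` of a concave function; unlike `edom f` it is convex without
any finiteness of `f`. -/
def posSet (f : E → ENNReal) : Set E := {x | f x ≠ 0}

theorem convex_posSet {f : E → ENNReal} (hf : Convex ℝ (hypo f)) : Convex ℝ (posSet f) := by
  intro a ha b hb s t hs ht hst
  obtain ⟨u, hu, hua⟩ := exists_pos_le ha
  obtain ⟨w, hw, hwb⟩ := exists_pos_le hb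
  have h := conc hf hu hw hua hwb hs ht hst
  have hpos : 0 < s * u + t * w := by
    rcases hs.eq_or_lt with rfl | hs'
    · have : t = 1 := by linarith
      subst this
      simpa using hw
    · positivity
  exact (lt_of_lt_of_le (ENNReal.ofReal_pos.2 hpos) h).ne'

/-- In finite dimensions a convex set whose closure has nonempty interior spans the whole space, so
it has nonempty interior itself; the two interiors then agree. -/
theorem interior_closure_subset {T : Set E} (hT : Convex ℝ T) :
    interior (closure T) ⊆ interior T := by
  intro x hx
  have hspan : affineSpan ℝ T = ⊤ := by
    have h1 : affineSpan ℝ (closure T) = ⊤ := affineSpan_eq_top_of_nonempty_interior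
      ⟨x, interior_mono (subset_convexHull ℝ _) hx⟩
    have h2 : affineSpan ℝ (closure T) ≤ affineSpan ℝ T :=
      affineSpan_le.2 (closure_minimal (subset_affineSpan _ _)
        (affineSpan ℝ T).closed_of_finiteDimensional)
    exact top_le_iff.1 (h1 ▸ h2)
  rwa [← hT.interior_closure_eq_interior_of_nonempty_interior
    (hT.interior_nonempty_iff_affineSpan_eq_top.2 hspan)]

theorem edom_subset_posSet (f : E → ENNReal) : edom f ⊆ posSet f := fun _ h => h.1

/-- If a concave `f` took the value `∞` anywhere, it would be infinite throughout the interior of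
its positivity set, so no interior point could be a limit of points of `edom f`. -/
theorem ne_top_of_interior {f : E → ENNReal} (hf : Convex ℝ (hypo f)) {e : E}
    (he : e ∈ interior (closure (edom f))) (a : E) : f a ≠ ⊤ := by
  intro hatop
  have heT : e ∈ interior (posSet f) :=
    interior_closure_subset (convex_posSet hf)
      (interior_mono (closure_mono (edom_subset_posSet f)) he)
  obtain ⟨x, hxT, hxd⟩ := mem_closure_iff.1 (interior_subset he) _ isOpen_interior heT
  -- a point `x'` slightly beyond `x` on the ray from `a`
  have hcont : Tendsto (fun δ : ℝ => x + δ • (x - a)) (𝓝[>] 0) (𝓝 x) := by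
    have : Continuous (fun δ : ℝ => x + δ • (x - a)) := by fun_prop
    simpa using (this.tendsto 0).mono_left nhdsWithin_le_nhds
  obtain ⟨δ, hδT, hδ⟩ := ((hcont.eventually (mem_interior_iff_mem_nhds.1 hxT)).and
    self_mem_nhdsWithin).exists
  have hδ0 : 0 < δ := hδ
  obtain ⟨w, hw, hwx⟩ := exists_pos_le hδT
  set s := δ / (1 + δ) with hs
  set t := 1 / (1 + δ) with ht
  have hs0 : 0 < s := by positivity
  have ht0 : 0 < t := by positivity
  have hst : s + t = 1 := by rw [hs, ht]; field_simp; ring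
  have hx : s • a + t • (x + δ • (x - a)) = x := by
    have h1 : t * δ = s := by rw [hs, ht]; field_simp
    have h2 : s • a + t • (x + δ • (x - a)) = s • a + t • x + (t * δ) • (x - a) := by module
    rw [h2, h1]
    have h3 : s • a + t • x + s • (x - a) = (s + t) • x := by module
    rw [h3, hst, one_smul]
  have hM : 0 ≤ (f x).toReal := ENNReal.toReal_nonneg
  have h := conc hf (u := ((f x).toReal + 1) / s) (by positivity) hw (by rw [hatop]; exact le_top)
    hwx hs0.le ht0.le hst
  rw [hx, ENNReal.ofReal_le_iff_le_toReal hxd.2, mul_div_cancel₀ _ hs0.ne'] at h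
  nlinarith [mul_pos ht0 hw]

/-! ### Sublevel sets of the radial transform -/

theorem one_lt_of_radTrans_lt {f : E → ENNReal} {e y : E} {c : ℝ} (hc : 0 < c)
    (h : radTrans f e y < ENNReal.ofReal c) :
    1 < ENNReal.ofReal c * f (e + c⁻¹ • (y - e)) := by
  by_contra! hle
  exact h.not_ge (le_iSup₂ (f := fun (v : ℝ)
    (_ : v ∈ {v : ℝ | 0 < v ∧ ENNReal.ofReal v * f (e + v⁻¹ • (y - e)) ≤ 1}) =>
      ENNReal.ofReal v) c ⟨hc, hle⟩)

/-- When `f e > 0`, concavity makes `v ↦ v * f (e + (y - e) / v)` strictly increasing once it is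
positive, so a single value `≥ 1` at `v` bounds the radial transform by `v`. -/
theorem radTrans_le {f : E → ENNReal} (hf : Convex ℝ (hypo f)) {e y : E} {v u : ℝ}
    (hv : 0 < v) (hu : 0 < u) (he : f e ≠ 0)
    (hfu : ENNReal.ofReal u ≤ f (e + v⁻¹ • (y - e))) (hvu : 1 ≤ v * u) :
    radTrans f e y ≤ ENNReal.ofReal v := by
  refine iSup₂_le fun w hw => ENNReal.ofReal_le_ofReal ?_
  obtain ⟨hw0, hw1⟩ := hw
  by_contra! hvw
  obtain ⟨k, hk, hke⟩ := exists_pos_le he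
  have hle : v / w ≤ 1 := (div_le_one hw0).2 hvw.le
  have h := conc hf hu hk hfu hke (s := v / w) (t := 1 - v / w) (by positivity) (by linarith)
    (by ring)
  have hpt : (v / w) • (e + v⁻¹ • (y - e)) + (1 - v / w) • e = e + w⁻¹ • (y - e) := by
    have h1 : v / w * v⁻¹ = w⁻¹ := by field_simp
    rw [← h1]; module
  rw [hpt] at h
  have h2 : ENNReal.ofReal w * ENNReal.ofReal (v / w * u + (1 - v / w) * k) ≤ 1 :=
    (mul_le_mul_right h _).trans hw1
  rw [← ENNReal.ofReal_mul hw0.le, ENNReal.ofReal_le_one] at h2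
  have h3 : w * (v / w * u + (1 - v / w) * k) = v * u + (w - v) * k := by field_simp
  rw [h3] at h2
  nlinarith [mul_pos (sub_pos.2 hvw) hk]

/-- Moving along the ray from `e` slightly beyond an interior point `y` of the positivity set, `f`
cannot drop below values less than `f y`; hence `f y > 1` forces `f^{Γ,e}(y) < 1`. -/
theorem radTrans_lt_one {f : E → ENNReal} (hf : Convex ℝ (hypo f)) {e y : E} (he : f e ≠ 0)
    (hy : y ∈ interior (posSet f)) {u : ℝ} (hu : 1 < u) (hfu : ENNReal.ofReal u ≤ f y) :
    radTrans f e y < 1 := by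
  have hcont : Tendsto (fun δ : ℝ => y + δ • (y - e)) (𝓝[>] 0) (𝓝 y) := by
    have : Continuous (fun δ : ℝ => y + δ • (y - e)) := by fun_prop
    simpa using (this.tendsto 0).mono_left nhdsWithin_le_nhds
  obtain ⟨δ, hδT, hδ⟩ := ((hcont.eventually (mem_interior_iff_mem_nhds.1 hy)).and
    self_mem_nhdsWithin).exists
  have hδ0 : 0 < δ := hδ
  obtain ⟨w, hw, hwx⟩ := exists_pos_le hδT
  -- `s` is the fraction of the way from `y` to `y + δ • (y - e)`, `v = 1 / (1 + s * δ)`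
  have hlim : Tendsto (fun s : ℝ => ((1 - s) * u) / (1 + s * δ)) (𝓝[>] 0) (𝓝 u) := by
    have : ContinuousAt (fun s : ℝ => ((1 - s) * u) / (1 + s * δ)) 0 := by
      apply ContinuousAt.div (by fun_prop) (by fun_prop)
      simp
    simpa using this.tendsto.mono_left nhdsWithin_le_nhds
  obtain ⟨s, hs, hsu⟩ := (Filter.Eventually.and (Ioo_mem_nhdsGT (zero_lt_one' ℝ))
    (hlim.eventually (lt_mem_nhds hu))).exists
  obtain ⟨hs0, hs1⟩ : 0 < s ∧ s < 1 := hs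
  have hd : 1 < 1 + s * δ := by nlinarith [mul_pos hs0 hδ0]
  have hd0 : 0 < 1 + s * δ := by linarith
  have h := conc hf (by linarith) hw hfu hwx (s := 1 - s) (t := s) (by linarith) hs0.le (by ring)
  have hpt : (1 - s) • y + s • (y + δ • (y - e)) = e + ((1 + s * δ)⁻¹)⁻¹ • (y - e) := by
    rw [inv_inv]; module
  rw [hpt] at h
  rw [lt_div_iff₀ hd0, one_mul] at hsu
  have hsw := mul_pos hs0 hw
  refine (radTrans_le hf (inv_pos.2 hd0) (by nlinarith) he h ?_).trans_lt ?_
  · rw [inv_mul_eq_div, one_le_div hd0]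
    linarith
  · rw [ENNReal.ofReal_lt_one]
    exact inv_lt_one_of_one_lt₀ hd

/-! ### The identifier of the feasible region -/

theorem Assumptions.isClosed_feas {P : Setup E m} (hP : Assumptions P) : IsClosed P.feas :=
  isClosed_iInter hP.closedS

theorem Assumptions.phi_SL {P : Setup E m} (hP : Assumptions P) : P.phiS P.xSL < 1 := by
  have := hP.slater.1
  rwa [hP.identifies] at this

theorem Assumptions.phi_segment {P : Setup E m} (hP : Assumptions P) {y : E} (hy : P.phiS y ≤ 1)
    {t : ℝ} (ht0 : 0 < t) (ht1 : t ≤ 1) : P.phiS ((1 - t) • y + t • P.xSL) < 1 := by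
  have h := hP.convexId.2 (mem_univ y) (mem_univ P.xSL) (show 0 ≤ 1 - t by linarith)
    ht0.le (by ring)
  simp only [smul_eq_mul] at h
  nlinarith [hP.phi_SL]

theorem tendsto_segment (a b : E) :
    Tendsto (fun t : ℝ => (1 - t) • a + t • b) (𝓝[>] 0) (𝓝 a) := by
  have : Continuous (fun t : ℝ => (1 - t) • a + t • b) := by fun_prop
  simpa using (this.tendsto 0).mono_left nhdsWithin_le_nhds

/-- The Slater point upgrades the identification of the interior of `𝒮` to one of `𝒮` itself. -/
theorem Assumptions.mem_feas_iff {P : Setup E m} (hP : Assumptions P) (y : E) :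
    y ∈ P.feas ↔ P.phiS y ≤ 1 := by
  have key : ∀ z, P.phiS z < 1 → z ∈ P.feas := fun z hz =>
    interior_subset (by rw [hP.identifies]; exact hz)
  constructor
  · intro hy
    by_contra! hlt
    obtain ⟨t, ht, ht1⟩ := (((tendsto_segment y P.xSL).eventually (hP.lscId y 1 hlt)).and
      (Ioo_mem_nhdsGT (zero_lt_one' ℝ))).exists
    obtain ⟨ht0, ht1⟩ : 0 < t ∧ t < 1 := ht1
    have hconv : Convex ℝ P.feas := convex_iInter hP.convexS
    have hmem := hconv.combo_self_interior_mem_interior hy hP.slater.1 (a := 1 - t) (b := t)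
      (by linarith) ht0 (by ring)
    rw [hP.identifies] at hmem
    exact lt_asymm ht hmem
  · intro hy
    refine hP.isClosed_feas.mem_of_tendsto (tendsto_segment y P.xSL) ?_
    filter_upwards [Ioo_mem_nhdsGT (zero_lt_one' ℝ)] with t ht
    exact key _ (hP.phi_segment hy ht.1 ht.2.le)

theorem Assumptions.e0_interior {P : Setup E m} (hP : Assumptions P) :
    P.e0 ∈ interior (posSet P.f) :=
  interior_closure_subset (convex_posSet hP.concave)
    (interior_mono (closure_mono (edom_subset_posSet P.f)) hP.e0int)

theorem Assumptions.f_e0 {P : Setup E m} (hP : Assumptions P) : P.f P.e0 ≠ 0 :=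
  interior_subset hP.e0_interior

/-- `η > 0` makes the gauge of `x*` less than `1`, which places `x*` strictly between `e0` and a
point of `S0`. -/
theorem Assumptions.xstar_interior {P : Setup E m} (hP : Assumptions P) :
    P.xstar ∈ interior (posSet P.f) := by
  have hg : gaugeFrom P.S0 P.e0 P.xstar < 1 := by
    have h := hP.etaPos
    have h2 := hP.phi_SL
    unfold Setup.eta at h
    have := pos_of_mul_pos_left h (by linarith)
    linarith
  have hne : {v : ℝ | 0 < v ∧ P.e0 + v⁻¹ • (P.xstar - P.e0) ∈ P.S0}.Nonempty := by
    refine ⟨1, one_pos, subset_closure ?_⟩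
    have : P.e0 + (1 : ℝ)⁻¹ • (P.xstar - P.e0) = P.xstar := by simp
    rw [this]
    exact ⟨by rw [hP.xstarOpt]; exact hP.pStarPos.ne', by rw [hP.xstarOpt]; exact hP.pStarFin⟩
  obtain ⟨v, ⟨hv0, hv⟩, hv1⟩ := exists_lt_of_csInf_lt hne hg
  have h := (convex_posSet hP.concave).combo_interior_closure_mem_interior hP.e0_interior
    (closure_mono (edom_subset_posSet P.f) hv) (a := 1 - v) (b := v) (by linarith) hv0.le (by ring)
  have hpt : (1 - v) • P.e0 + v • (P.e0 + v⁻¹ • (P.xstar - P.e0)) = P.xstar := by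
    rw [smul_add, smul_smul, mul_inv_cancel₀ hv0.ne']; module
  rwa [hpt] at h

/-! ### Limits of nearly optimal dual points -/

/-- Dual points whose values tend to at most `1` accumulate only at feasible points with `f ≥ 1`:
this is upper semicontinuity of `f` together with lower semicontinuity of `φ_𝒮`. -/
theorem limit_primal {P : Setup E m} (hP : Assumptions P) {y : E} {ys : ℕ → E} {c : ℕ → ℝ}
    (hc0 : ∀ n, 0 < c n) (hc : Tendsto c atTop (𝓝 1)) (hys : Tendsto ys atTop (𝓝 y))
    (hPhi : ∀ n, P.Phi (ys n) < ENNReal.ofReal (c n)) : y ∈ P.feas ∧ 1 ≤ P.f y := by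
  constructor
  · rw [hP.mem_feas_iff]
    by_contra! hlt
    obtain ⟨r, hr1, hr⟩ := exists_between hlt
    obtain ⟨n, hn, hcn⟩ := ((hys.eventually (hP.lscId y r hr)).and
      (hc.eventually (gt_mem_nhds hr1))).exists
    have := (ENNReal.ofReal_lt_ofReal_iff (hc0 n)).1 ((le_max_right _ _).trans_lt (hPhi n))
    linarith
  · by_contra! hlt
    obtain ⟨r, hr, hr1⟩ := ENNReal.lt_iff_exists_nnreal_btwn.1 hlt
    have hr1' : (r : ℝ) < 1 := by exact_mod_cast hr1
    have hz : Tendsto (fun n => P.e0 + (c n)⁻¹ • (ys n - P.e0)) atTop (𝓝 y) := by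
      have := ((hc.inv₀ one_ne_zero).smul (hys.sub_const P.e0)).const_add P.e0
      simpa using this
    have hcr : Tendsto (fun n => c n * r) atTop (𝓝 r) := by simpa using hc.mul_const (r : ℝ)
    obtain ⟨n, hn, hcn⟩ := ((hz.eventually (hP.usc y r hr)).and
      (hcr.eventually (gt_mem_nhds hr1'))).exists
    have h1 := one_lt_of_radTrans_lt (hc0 n) ((le_max_left _ _).trans_lt (hPhi n))
    have h2 := h1.trans_le (mul_le_mul_right hn.le _)
    rw [← ENNReal.ofReal_coe_nnreal, ← ENNReal.ofReal_mul (hc0 n).le, ENNReal.one_lt_ofReal] at h2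
    linarith

/-! ### Comparing primal and dual values with `1` -/

theorem Psi_of_mem {P : Setup E m} {x : E} (hx : x ∈ P.feas) : P.Psi x = P.f x := by
  simp [Setup.Psi, indic, hx]

theorem Psi_of_notMem {P : Setup E m} {x : E} (hx : x ∉ P.feas) : P.Psi x = 0 := by
  simp [Setup.Psi, indic, hx]

theorem one_le_Phi {P : Setup E m} (hP : Assumptions P) (h : P.pStar ≤ 1) (y : E) :
    1 ≤ P.Phi y := by
  by_contra! hlt
  have h1 : radTrans P.f P.e0 y < ENNReal.ofReal 1 := by
    simpa using (le_max_left _ _).trans_lt hlt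
  have h2 : P.phiS y < 1 := ENNReal.ofReal_lt_one.1 ((le_max_right _ _).trans_lt hlt)
  have h3 : 1 < P.f y := by simpa using one_lt_of_radTrans_lt one_pos h1
  have h4 : P.Psi y ≤ P.pStar := le_iSup P.Psi y
  rw [Psi_of_mem ((hP.mem_feas_iff y).2 h2.le)] at h4
  exact (h3.trans_le (h4.trans h)).false

theorem Phi_le_one {P : Setup E m} (hP : Assumptions P) {x : E} (hx : x ∈ P.feas)
    (hfx : 1 ≤ P.f x) : P.Phi x ≤ 1 := by
  refine max_le ?_ (ENNReal.ofReal_le_one.2 ((hP.mem_feas_iff x).1 hx))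
  have := radTrans_le hP.concave (e := P.e0) (y := x) one_pos one_pos hP.f_e0 (by simpa using hfx)
    (by norm_num)
  simpa using this

/-- If `p* > 1`, moving from `x*` a little towards the Slater point keeps `f > 1` and makes the
constraint strict, giving a dual value below `1`. -/
theorem exists_Phi_lt_one {P : Setup E m} (hP : Assumptions P) (h : 1 < P.pStar) :
    ∃ y, P.Phi y < 1 := by
  set u := P.pStar.toReal with hu_def
  have hu : 1 < u := by
    rw [hu_def, ← ENNReal.ofReal_lt_iff_lt_toReal zero_le_one hP.pStarFin]
    simpa using h
  have hfu : ENNReal.ofReal u ≤ P.f P.xstar := by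
    rw [hP.xstarOpt, hu_def, ENNReal.ofReal_toReal hP.pStarFin]
  obtain ⟨w, hw, hwx⟩ := exists_pos_le hP.slater.2.1
  have hlim : Tendsto (fun t : ℝ => (1 - t) * u + t * w) (𝓝[>] 0) (𝓝 u) := by
    have : Continuous (fun t : ℝ => (1 - t) * u + t * w) := by fun_prop
    simpa using (this.tendsto 0).mono_left nhdsWithin_le_nhds
  obtain ⟨t, hty, htu, ht⟩ := (((tendsto_segment P.xstar P.xSL).eventually
    (isOpen_interior.mem_nhds hP.xstar_interior)).and ((hlim.eventually (lt_mem_nhds hu)).and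
      (Ioo_mem_nhdsGT (zero_lt_one' ℝ)))).exists
  obtain ⟨ht0, ht1⟩ : 0 < t ∧ t < 1 := ht
  have hf := conc hP.concave (by linarith) hw hfu hwx (s := 1 - t) (t := t) (by linarith) ht0.le
    (by ring)
  exact ⟨_, max_lt (radTrans_lt_one hP.concave hP.f_e0 hty htu hf)
    (ENNReal.ofReal_lt_one.2
      (hP.phi_segment ((hP.mem_feas_iff _).1 hP.xstarFeas) ht0 ht1.le))⟩

/-- If `d* ≤ 1`, a minimizing sequence of the dual stays bounded because the rescaled points
`e0 + (y - e0) / c` lie in the compact set `S0`; its limit certifies `p* ≥ 1`. -/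
theorem one_le_pStar {P : Setup E m} (hP : Assumptions P) (h : P.dStar ≤ 1) : 1 ≤ P.pStar := by
  set c : ℕ → ℝ := fun n => 1 + 1 / ((n : ℝ) + 1) with hc_def
  have hc1 : ∀ n, 1 < c n := fun n => by
    have : 0 < 1 / ((n : ℝ) + 1) := by positivity
    simp only [hc_def]; linarith
  have hc0 : ∀ n, 0 < c n := fun n => one_pos.trans (hc1 n)
  have hc : Tendsto c atTop (𝓝 1) := by
    simpa [hc_def] using (tendsto_one_div_add_atTop_nhds_zero_nat (𝕜 := ℝ)).const_add 1
  have hex : ∀ n, ∃ y, P.Phi y < ENNReal.ofReal (c n) := fun n =>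
    iInf_lt_iff.1 (h.trans_lt (ENNReal.one_lt_ofReal.2 (hc1 n)))
  choose ys hys using hex
  have hz : ∀ n, P.e0 + (c n)⁻¹ • (ys n - P.e0) ∈ P.S0 := fun n => by
    refine subset_closure ⟨fun h0 => ?_, ne_top_of_interior hP.concave hP.e0int _⟩
    have := one_lt_of_radTrans_lt (hc0 n) ((le_max_left _ _).trans_lt (hys n))
    simp [h0] at this
  have hcomp : IsCompact P.S0 :=
    Metric.isCompact_of_isClosed_isBounded isClosed_closure
      (Metric.isBounded_iff_ediam_ne_top.2 hP.diamFin)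
  obtain ⟨y, -, k, hk, hlim⟩ := hcomp.tendsto_subseq hz
  have hck := hc.comp hk.tendsto_atTop
  have hyk : Tendsto (ys ∘ k) atTop (𝓝 y) := by
    have h1 := (hck.smul (hlim.sub_const P.e0)).const_add P.e0
    have h2 : P.e0 + (1 : ℝ) • (y - P.e0) = y := by simp
    rw [h2] at h1
    refine h1.congr fun n => ?_
    simp [smul_smul, mul_inv_cancel₀ (hc0 (k n)).ne']
  obtain ⟨hyf, hfy⟩ := limit_primal hP (fun n => hc0 (k n)) hck hyk (fun n => hys (k n))
  calc 1 ≤ P.f y := hfy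
    _ = P.Psi y := (Psi_of_mem hyf).symm
    _ ≤ P.pStar := le_iSup P.Psi y

/-- Theorem 1 of the paper: under (A1)-(A4), if `p* = 1` or `d* = 1`, then
`p* = d* = 1` and the maximizers of `Ψ` are exactly the minimizers of `Φ`. -/
theorem statement0 (P : Setup E m) (hP : Assumptions P)
    (h : P.pStar = 1 ∨ P.dStar = 1) :
    P.pStar = 1 ∧ P.dStar = 1 ∧
      {x : E | ∀ z, P.Psi z ≤ P.Psi x} = {y : E | ∀ z, P.Phi y ≤ P.Phi z} := by
  have hp : P.pStar = 1 := by
    rcases h with h | h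
    · exact h
    · refine le_antisymm ?_ (one_le_pStar hP h.le)
      by_contra! hlt
      obtain ⟨y, hy⟩ := exists_Phi_lt_one hP hlt
      have h1 : P.dStar ≤ P.Phi y := iInf_le P.Phi y
      exact (h1.trans_lt hy).ne h
  have hstar : P.Phi P.xstar ≤ 1 := Phi_le_one hP hP.xstarFeas (hP.xstarOpt.trans hp).ge
  have hd : P.dStar = 1 :=
    le_antisymm ((iInf_le P.Phi P.xstar).trans hstar) (le_iInf (one_le_Phi hP hp.le))
  refine ⟨hp, hd, ?_⟩
  ext x
  constructor
  · intro hx z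
    have h1 : 1 ≤ P.Psi x := by
      have := hx P.xstar
      rwa [Psi_of_mem hP.xstarFeas, hP.xstarOpt, hp] at this
    have hxf : x ∈ P.feas := by
      by_contra hn
      rw [Psi_of_notMem hn] at h1
      simp at h1
    rw [Psi_of_mem hxf] at h1
    exact (Phi_le_one hP hxf h1).trans (one_le_Phi hP hp.le z)
  · intro hx z
    have hc1 : ∀ n : ℕ, 1 < 1 + 1 / ((n : ℝ) + 1) := fun n => by
      have : 0 < 1 / ((n : ℝ) + 1) := by positivity
      linarith
    obtain ⟨hxf, hfx⟩ := limit_primal hP (fun n => one_pos.trans (hc1 n))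
      (by simpa using (tendsto_one_div_add_atTop_nhds_zero_nat (𝕜 := ℝ)).const_add 1)
      (tendsto_const_nhds (x := x))
      (fun n => ((hx P.xstar).trans hstar).trans_lt (ENNReal.one_lt_ofReal.2 (hc1 n)))
    rw [Psi_of_mem hxf]
    exact ((le_iSup P.Psi z).trans hp.le).trans hfx

end MultiRadial
end
end

section
/- Under assumptions (A1)–(A4), if y ∈ 𝒮 satisfies 0 < f^{Γ,e0}(y) ≤ 1, then f(y) − 1 ≥ (R0/(D0 + R0))·(1 − f^{Γ,e0}(y))/f^{Γ,e0}(y). -/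
/-!
Everything takes place in `C = closure (hypo f)`, which is convex, and in which upper
semicontinuity keeps `u ≤ f x` for every `(x, u) ∈ C` (`le_of_mem_closure_hypo`).

Let `t = f^{Γ,e0}(y)` and `x = e0 + (y - e0)/t`. For `v > t` the definition of the radial transform
gives `f (e0 + (y - e0)/v) > 1/v`; letting `v ↓ t` puts `(x, 1/t)` in `C`
(`radial_mem_closure_hypo`). As `f` never takes the value `∞` (`ne_top_of_mem_edom`), `x ∈ S0`, so
`‖x - e0‖ ≤ D0`. Hence `z = e0 - (R0/D0)(x - e0)` is within `R0` of `e0`, so `z ∈ S0`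
(`mem_of_norm_le_innerRadius`) and `(z, 0) ∈ C` (`zero_mem_closure_hypo`). The point `y` lies
on the segment `[z, x]`, with weight `lam = (t D0 + R0)/(D0 + R0)` on `x`, and convexity of `C` gives
`f y ≥ lam / t = 1 + (R0/(D0 + R0)) (1 - t)/t`.
-/

open Set Filter Topology Classical

noncomputable section

namespace MultiRadial

variable {E : Type*} [NormedAddCommGroup E] [InnerProductSpace ℝ E] [FiniteDimensional ℝ E]

variable {m : ℕ}

/-- Upper semicontinuity makes the hypograph closed, up to the points at heights `u ≤ 0`. -/
lemma le_of_mem_closure_hypo {E : Type*} [NormedAddCommGroup E] [InnerProductSpace ℝ E]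
    {f : E → ENNReal} (hf : UpperSemicontinuous f) {p : E × ℝ} (hp : p ∈ closure (hypo f)) :
    ENNReal.ofReal p.2 ≤ f p.1 := by
  by_contra! hlt
  obtain ⟨c, hc1, hc2⟩ := exists_between hlt
  have h1 : ∀ᶠ q : E × ℝ in 𝓝 p, f q.1 < c :=
    continuous_fst.continuousAt.eventually (hf p.1 c hc1)
  have h2 : ∀ᶠ q : E × ℝ in 𝓝 p, c < ENNReal.ofReal q.2 :=
    (ENNReal.continuous_ofReal.comp continuous_snd).continuousAt.eventually (lt_mem_nhds hc2)
  obtain ⟨q, hq, hq1, hq2⟩ := (mem_closure_iff_frequently.1 hp).and_eventually (h1.and h2) |>.exists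
  exact absurd hq.2 (not_le.2 (hq1.trans hq2))

lemma zero_mem_closure_hypo {E : Type*} [NormedAddCommGroup E] [InnerProductSpace ℝ E]
    {f : E → ENNReal} {z : E} (hz : z ∈ closure (edom f)) :
    (z, (0 : ℝ)) ∈ closure (hypo f) := by
  rw [Metric.mem_closure_iff] at hz ⊢
  intro ε hε
  obtain ⟨w, hw, hd⟩ := hz ε hε
  have hpos : 0 < (f w).toReal := ENNReal.toReal_pos hw.1 hw.2
  have hm : 0 < min (ε / 2) (f w).toReal := lt_min (half_pos hε) hpos
  refine ⟨(w, min (ε / 2) (f w).toReal), ⟨hm, ?_⟩, ?_⟩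
  · exact ENNReal.ofReal_le_of_le_toReal (min_le_right _ _)
  · rw [Prod.dist_eq]
    refine max_lt hd ?_
    simp only [dist_zero_left, Real.norm_eq_abs, abs_of_pos hm]
    exact (min_le_left _ _).trans_lt (half_lt_self hε)

/-- A concave u.s.c. function that is positive and finite somewhere is finite everywhere: an infinite
value at `x` would spread along segments issuing from `x`, and reach `w` by semicontinuity. -/
lemma ne_top_of_mem_edom {E : Type*} [NormedAddCommGroup E] [InnerProductSpace ℝ E]
    {f : E → ENNReal} (hc : Convex ℝ (hypo f)) (hf : UpperSemicontinuous f) {w : E}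
    (hw : w ∈ edom f) (x : E) : f x ≠ ⊤ := by
  intro hx
  set a := (f w).toReal with ha
  have hpos : 0 < a := ENNReal.toReal_pos hw.1 hw.2
  -- As `s ↓ 0` the combinations `(1 - s) (w, a) + s (x, 1/s)` tend to `(w, a + 1)`.
  have hmem : (w, a + 1) ∈ closure (hypo f) := by
    have ht : Tendsto (fun s : ℝ => ((1 - s) • w + s • x, (1 - s) * a + 1)) (𝓝[>] 0)
        (𝓝 (w, a + 1)) := by
      have : Continuous (fun s : ℝ => ((1 - s) • w + s • x, (1 - s) * a + 1)) := by fun_prop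
      have h := this.tendsto 0
      simp only [sub_zero, one_smul, zero_smul, add_zero, one_mul] at h
      exact h.mono_left nhdsWithin_le_nhds
    refine mem_closure_of_tendsto ht ?_
    filter_upwards [Ioo_mem_nhdsGT (zero_lt_one' ℝ)] with s hs
    have h1 : (w, a) ∈ hypo f := ⟨hpos, by simp [ha, ENNReal.ofReal_toReal hw.2]⟩
    have h2 : (x, s⁻¹) ∈ hypo f := ⟨inv_pos.2 hs.1, by simp [hx]⟩
    have h3 := hc h1 h2 (sub_nonneg.2 hs.2.le) hs.1.le (by ring)
    simpa [hs.1.ne'] using h3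
  have h := le_of_mem_closure_hypo hf hmem
  have := (ENNReal.ofReal_le_iff_le_toReal hw.2).1 h
  simp only [← ha] at this
  linarith

lemma radial_mem_closure_hypo {E : Type*} [NormedAddCommGroup E] [InnerProductSpace ℝ E]
    {f : E → ENNReal} {e y : E} (h0 : 0 < radTrans f e y) (h1 : radTrans f e y ≠ ⊤) :
    (e + (radTrans f e y).toReal⁻¹ • (y - e), (radTrans f e y).toReal⁻¹) ∈ closure (hypo f) := by
  set t := (radTrans f e y).toReal with ht
  have htpos : 0 < t := ENNReal.toReal_pos h0.ne' h1
  have hlim : Tendsto (fun v : ℝ => (e + v⁻¹ • (y - e), v⁻¹)) (𝓝[>] t)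
      (𝓝 (e + t⁻¹ • (y - e), t⁻¹)) := by
    have hi : Tendsto (fun v : ℝ => v⁻¹) (𝓝[>] t) (𝓝 t⁻¹) :=
      (tendsto_inv₀ htpos.ne').mono_left nhdsWithin_le_nhds
    exact (tendsto_const_nhds.add (hi.smul tendsto_const_nhds)).prodMk_nhds hi
  refine mem_closure_of_tendsto hlim ?_
  filter_upwards [self_mem_nhdsWithin] with v hv
  have hv : t < v := hv
  have hvpos : 0 < v := htpos.trans hv
  refine ⟨inv_pos.2 hvpos, ?_⟩
  have hgt : 1 < ENNReal.ofReal v * f (e + v⁻¹ • (y - e)) := by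
    by_contra! hle
    have hsup : ENNReal.ofReal v ≤ radTrans f e y :=
      le_iSup₂_of_le (f := fun (v : ℝ) (_ : v ∈ {v : ℝ | 0 < v ∧
        ENNReal.ofReal v * f (e + v⁻¹ • (y - e)) ≤ 1}) => ENNReal.ofReal v) v ⟨hvpos, hle⟩ le_rfl
    exact absurd ((ENNReal.ofReal_le_iff_le_toReal h1).1 hsup) (not_le.2 hv)
  rw [ENNReal.ofReal_inv_of_pos hvpos, ENNReal.inv_le_iff_le_mul]
  · exact hgt.le
  · intro _; exact (ENNReal.ofReal_pos.2 hvpos).ne'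
  · intro h; exact absurd h ENNReal.ofReal_ne_top

lemma mem_of_norm_le_innerRadius {E : Type*} [NormedAddCommGroup E]
    [InnerProductSpace ℝ E] {S : Set E} (hS : IsClosed S) {e z : E} (hR : 0 < innerRadius S e)
    (hz : ‖z - e‖ ≤ innerRadius S e) : z ∈ S := by
  have hball : Metric.ball e (innerRadius S e) ⊆ S := by
    intro w hw
    by_contra hn
    rw [mem_ball_iff_norm] at hw
    refine absurd hw (not_lt.2 (csInf_le ⟨0, ?_⟩ ⟨w, hn, rfl⟩))
    rintro _ ⟨u, -, rfl⟩
    exact norm_nonneg _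
  have := closure_minimal hball hS
  rw [closure_ball e hR.ne'] at this
  exact this (mem_closedBall_iff_norm.2 hz)

/-- under (A1)-(A4), if `y ∈ 𝒮` satisfies `0 < f^{Γ,e0}(y) ≤ 1`, then
`f(y) - 1 ≥ (R0/(D0+R0)) * (1 - f^{Γ,e0}(y)) / f^{Γ,e0}(y)`. -/
theorem statement4 (P : Setup E m) (hP : Assumptions P) (y : E) (hy : y ∈ P.feas)
    (h0 : 0 < radTrans P.f P.e0 y) (h1 : radTrans P.f P.e0 y ≤ 1) :
    ENNReal.ofReal (1 + P.R0 / (P.D0 + P.R0) *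
        ((1 - (radTrans P.f P.e0 y).toReal) / (radTrans P.f P.e0 y).toReal)) ≤
      P.f y := by
  have h1' : radTrans P.f P.e0 y ≠ ⊤ := ne_top_of_le_ne_top ENNReal.one_ne_top h1
  have hxC := radial_mem_closure_hypo h0 h1'
  have htpos : 0 < (radTrans P.f P.e0 y).toReal := ENNReal.toReal_pos h0.ne' h1'
  have ht1 : (radTrans P.f P.e0 y).toReal ≤ 1 := ENNReal.toReal_le_of_le_ofReal zero_le_one (by simpa)
  set t := (radTrans P.f P.e0 y).toReal with ht
  set x := P.e0 + t⁻¹ • (y - P.e0) with hx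
  have hxe : x - P.e0 = t⁻¹ • (y - P.e0) := by rw [hx, add_sub_cancel_left]
  have hye : y = P.e0 + t • (x - P.e0) := by
    rw [hxe, smul_smul, mul_inv_cancel₀ htpos.ne', one_smul, add_sub_cancel]
  have hfx : ENNReal.ofReal t⁻¹ ≤ P.f x := le_of_mem_closure_hypo hP.usc hxC
  have hxS : x ∈ P.S0 := subset_closure
    ⟨((ENNReal.ofReal_pos.2 (inv_pos.2 htpos)).trans_le hfx).ne',
      ne_top_of_mem_edom hP.concave hP.usc hP.slater.2 x⟩
  have hR := hP.R0pos
  have hdist : ‖x - P.e0‖ ≤ P.D0 := by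
    rw [← dist_eq_norm]
    exact Metric.dist_le_diam_of_mem' hP.diamFin hxS (interior_subset hP.e0int)
  rcases (norm_nonneg (x - P.e0)).trans hdist |>.eq_or_lt with hD | hD
  · -- A vanishing diameter forces `y = x = e0`, and the bound becomes `f x ≥ 1 / t`.
    have hx0 : x - P.e0 = 0 := norm_le_zero_iff.1 (hD ▸ hdist)
    have hyx : y = x := by
      rw [hye, hx0, smul_zero, add_zero]
      exact (sub_eq_zero.1 hx0).symm
    rw [hyx, ← hD, zero_add, div_self hR.ne']
    convert hfx using 2
    field_simp
    ring
  · have hDR : 0 < P.D0 + P.R0 := add_pos hD hR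
    set z := P.e0 - (P.R0 / P.D0) • (x - P.e0) with hz
    have hzS : z ∈ P.S0 := by
      refine mem_of_norm_le_innerRadius isClosed_closure hR ?_
      rw [hz, sub_sub_cancel_left, norm_neg, norm_smul, Real.norm_of_nonneg (by positivity)]
      calc P.R0 / P.D0 * ‖x - P.e0‖ ≤ P.R0 / P.D0 * P.D0 := by gcongr
        _ = P.R0 := div_mul_cancel₀ _ hD.ne'
    have hzC : (z, (0 : ℝ)) ∈ closure (hypo P.f) := zero_mem_closure_hypo hzS
    have hcomb := hP.concave.closure hxC hzC
      (a := (t * P.D0 + P.R0) / (P.D0 + P.R0)) (b := (1 - t) * P.D0 / (P.D0 + P.R0))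
      (by positivity) (div_nonneg (mul_nonneg (sub_nonneg.2 ht1) hD.le) hDR.le)
      (by field_simp; ring)
    have hle := le_of_mem_closure_hypo hP.usc hcomb
    have hfst : ((t * P.D0 + P.R0) / (P.D0 + P.R0)) • x
        + ((1 - t) * P.D0 / (P.D0 + P.R0)) • z = y := by
      rw [hye, hz]
      match_scalars <;> field_simp <;> ring
    simp only [Prod.smul_mk, Prod.mk_add_mk, smul_eq_mul, mul_zero, add_zero, hfst] at hle
    convert hle using 2
    field_simp
    ring

end MultiRadial
end
end

section
/- Under assumptions (A1)–(A4), if p* ≥ 1 then f^{Γ,e0}(x*) ≤ 1 − (1 − γ_{S0,e0}(x*))·(p* − 1)/p*. -/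
/-!
Write `x = xstar`, `e = e0`, `p = p*`, `γ` for the gauge of `x`, and
`V(w) = 1 - (1 - w) (p - 1) / p`. If `v > V(γ)` then `v * f (e + (x - e)/v) > 1`, so `v` does not
contribute to the supremum defining the radial transform. For `v > 1` this is concavity of `f`
on the segment from `e`, where `f > 0`, to `x`, where `f = p ≥ 1`. For `v ≤ 1`, choose `w > γ`
close enough to `γ` that `v > V(w)`, which also forces `w < v`; then `e + (x - e)/v` lies between
`x` and `z = e + (x - e)/w`, and concavity with `f x = p`, `f z > 0` gives
`v * f (e + (x - e)/v) ≥ p (v - w) / (1 - w) > 1`.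

Positivity of `f` at `e` and at `z` (`ne_zero_of_gaugeFrom_lt`) needs care because `S0` is a
closure: it follows since `{f > 0}` is convex and a convex set in finite dimension has the same
interior as its closure (`interior_closure_of_convex`).
-/

open Set Filter Topology Classical

noncomputable section

namespace MultiRadial

variable {E : Type*} [NormedAddCommGroup E] [InnerProductSpace ℝ E] [FiniteDimensional ℝ E]

variable {m : ℕ}

/-- A convex set in finite dimension has the same interior as its closure: if the closure has
an interior point, then the affine span, being closed, is everything. -/
lemma interior_closure_of_convex {D : Set E} (hD : Convex ℝ D) :
    interior (closure D) ⊆ interior D := by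
  intro e he
  have hcl : closure D ⊆ (affineSpan ℝ D : Set E) :=
    closure_minimal (subset_affineSpan ℝ D) (AffineSubspace.closed_of_finiteDimensional _)
  have htop : affineSpan ℝ D = ⊤ := by
    rw [← top_le_iff, ← isOpen_interior.affineSpan_eq_top ⟨e, he⟩]
    exact affineSpan_le.2 (interior_subset.trans hcl)
  rwa [← hD.interior_closure_eq_interior_of_nonempty_interior
    (hD.interior_nonempty_iff_affineSpan_eq_top.2 htop)]

/-- Points where `f` is nonzero, finite or not, carry a point of the hypograph. -/
lemma exists_mem_hypo {f : E → ENNReal} {z : E} (hz : f z ≠ 0) :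
    ∃ ε : ℝ, (z, ε) ∈ hypo f := by
  obtain ⟨b, hb0, hb⟩ := ENNReal.lt_iff_exists_nnreal_btwn.1 (pos_iff_ne_zero.2 hz)
  exact ⟨b, by exact_mod_cast hb0, by simpa using hb.le⟩

/-- The positivity set is the projection of the hypograph. -/
lemma convex_support {f : E → ENNReal} (hf : Convex ℝ (hypo f)) :
    Convex ℝ {z | f z ≠ 0} := by
  intro x hx y hy a b ha hb hab
  obtain ⟨u, hu⟩ := exists_mem_hypo hx
  obtain ⟨v, hv⟩ := exists_mem_hypo hy
  have h := hf hu hv ha hb hab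
  exact ((ENNReal.ofReal_pos.2 h.1).trans_le h.2).ne'

/-- Strictly beyond the gauge value, rescaling towards `e` lands where `f` is positive: the
rescaled point is a convex combination of the interior point `e` and a point of the closure. -/
lemma ne_zero_of_gaugeFrom_lt {f : E → ENNReal} (hf : Convex ℝ (hypo f)) {e x : E}
    (he : e ∈ interior (closure (edom f))) (hx : x ∈ edom f) {w : ℝ}
    (hw : gaugeFrom (closure (edom f)) e x < w) : f (e + w⁻¹ • (x - e)) ≠ 0 := by
  have hD := convex_support hf
  have hcl : closure (edom f) ⊆ closure {z | f z ≠ 0} := closure_mono fun z hz => hz.1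
  have hne : {v : ℝ | 0 < v ∧ e + v⁻¹ • (x - e) ∈ closure (edom f)}.Nonempty :=
    ⟨1, one_pos, by simpa using subset_closure hx⟩
  obtain ⟨w₀, ⟨hw₀, hmem⟩, hlt⟩ := exists_lt_of_csInf_lt hne hw
  have hwpos : 0 < w := hw₀.trans hlt
  have key := hD.combo_interior_closure_mem_interior
    (interior_closure_of_convex hD (interior_mono hcl he)) (hcl hmem)
    (a := 1 - w₀ / w) (b := w₀ / w) (by rw [sub_pos, div_lt_one hwpos]; exact hlt)
    (by positivity) (by ring)
  have heq : (1 - w₀ / w) • e + (w₀ / w) • (e + w₀⁻¹ • (x - e)) = e + w⁻¹ • (x - e) := by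
    have : w₀ / w * w₀⁻¹ = w⁻¹ := by field_simp
    rw [smul_add, smul_smul, this]
    module
  rw [heq] at key
  exact interior_subset key

/-- Along a chord from `(x, p)` to a point `z` of positive value, concavity gives
`f (a x + b z) ≥ a p + b ε` for some `ε > 0`. -/
lemma le_of_combo {f : E → ENNReal} (hf : Convex ℝ (hypo f)) {x z : E} {p : ℝ}
    (hp : 0 < p) (hx : f x = ENNReal.ofReal p) (hz : f z ≠ 0) :
    ∃ ε > 0, ∀ a b : ℝ, 0 ≤ a → 0 ≤ b → a + b = 1 →
      ENNReal.ofReal (a * p + b * ε) ≤ f (a • x + b • z) := by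
  obtain ⟨ε, hε⟩ := exists_mem_hypo hz
  refine ⟨ε, hε.1, fun a b ha hb hab => ?_⟩
  have hxm : (x, p) ∈ hypo f := ⟨hp, hx.ge⟩
  exact (hf hxm hε ha hb hab).2

/-- inequality (21) of the paper: under (A1)-(A4), if `p* ≥ 1` then
`f^{Γ,e0}(x*) ≤ 1 - (1 - γ_{S0,e0}(x*)) * (p* - 1)/p*`. -/
theorem statement10 (P : Setup E m) (hP : Assumptions P) (h : 1 ≤ P.pStar) :
    radTrans P.f P.e0 P.xstar ≤
      ENNReal.ofReal
        (1 - (1 - gaugeFrom P.S0 P.e0 P.xstar) * ((P.pStar.toReal - 1) / P.pStar.toReal)) := by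
  have hφ : P.phiS P.xSL < 1 := by
    have h1 := hP.slater.1
    rw [hP.identifies] at h1
    exact h1
  have hγ : gaugeFrom P.S0 P.e0 P.xstar < 1 := by
    have h1 := hP.etaPos
    unfold Setup.eta at h1
    linarith [pos_of_mul_pos_left h1 (by linarith)]
  set γ := gaugeFrom P.S0 P.e0 P.xstar with hγdef
  have hγ0 : 0 ≤ γ := Real.sInf_nonneg fun v hv => hv.1.le
  set p := P.pStar.toReal with hpdef
  have hp1 : 1 ≤ p := by
    simpa using ENNReal.toReal_mono hP.pStarFin h
  have hp0 : 0 < p := by linarith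
  have hfx : P.f P.xstar = ENNReal.ofReal p := by
    rw [hP.xstarOpt, hpdef, ENNReal.ofReal_toReal hP.pStarFin]
  have hxd : P.xstar ∈ edom P.f := by
    constructor
    · rw [hP.xstarOpt]; exact hP.pStarPos.ne'
    · rw [hP.xstarOpt]; exact hP.pStarFin
  have hq0 : 0 ≤ (p - 1) / p := div_nonneg (by linarith) hp0.le
  refine iSup₂_le fun v hv => ENNReal.ofReal_le_ofReal ?_
  obtain ⟨hv0, hv1⟩ := hv
  by_contra! hlt
  -- any real lower bound `u` for `f` at the rescaled point satisfies `v * u ≤ 1`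
  have hub : ∀ u : ℝ, ENNReal.ofReal u ≤ P.f (P.e0 + v⁻¹ • (P.xstar - P.e0)) → v * u ≤ 1 := by
    intro u hu
    have h1 : ENNReal.ofReal (v * u) ≤ 1 := by
      rw [ENNReal.ofReal_mul hv0.le]
      exact (mul_le_mul_right hu _).trans hv1
    exact ENNReal.ofReal_le_one.1 h1
  rcases lt_or_ge 1 v with hv' | hv'
  · -- the rescaled point lies between `e0` and `xstar`
    have hz : P.f P.e0 ≠ 0 :=
      interior_subset (interior_closure_of_convex (convex_support hP.concave)
        (interior_mono (closure_mono fun z hz => hz.1) hP.e0int))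
    obtain ⟨ε, hε, hc⟩ := le_of_combo hP.concave hp0 hfx hz
    have h1 := hc v⁻¹ (1 - v⁻¹) (by positivity) (by
      rw [sub_nonneg]; exact inv_le_one_of_one_le₀ hv'.le) (by ring)
    have heq : v⁻¹ • P.xstar + (1 - v⁻¹) • P.e0 = P.e0 + v⁻¹ • (P.xstar - P.e0) := by module
    rw [heq] at h1
    have h2 := hub _ h1
    have h3 : v * (v⁻¹ * p + (1 - v⁻¹) * ε) = p + (v - 1) * ε := by field_simp
    nlinarith
  · -- the rescaled point lies between `xstar` and the point rescaled by some `w ∈ (γ, 1)`;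
    -- `w` is chosen so that the bound with `γ` replaced by `w` is still below `v`
    have hq : 0 < (p - 1) / p := by
      rcases hq0.lt_or_eq with h0 | h0
      · exact h0
      · rw [← h0] at hlt; linarith
    obtain ⟨w, hγw, hw⟩ : ∃ w, γ < w ∧ w < 1 - (1 - v) / ((p - 1) / p) := by
      apply exists_between
      rw [lt_sub_comm, div_lt_iff₀ hq]
      linarith
    rw [lt_sub_comm, div_lt_iff₀ hq] at hw
    have hw0 : 0 < w := hγ0.trans_lt hγw
    have hw1 : w < 1 := by
      by_contra! h1
      nlinarith
    have hwp : (1 - v) * p < (1 - w) * (p - 1) := by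
      have h1 := mul_lt_mul_of_pos_right hw hp0
      rwa [mul_assoc (1 - w), div_mul_cancel₀ _ hp0.ne'] at h1
    have hwv : w < v := by nlinarith
    obtain ⟨ε, hε, hc⟩ := le_of_combo hP.concave hp0 hfx
      (ne_zero_of_gaugeFrom_lt hP.concave hP.e0int hxd hγw)
    have hw1' : 0 < 1 - w := by linarith
    have hvw : 0 < v - w := by linarith
    have hv1' : 0 ≤ 1 - v := by linarith
    have h1 := hc ((v - w) / (v * (1 - w))) (w * (1 - v) / (v * (1 - w)))
      (by positivity) (by positivity) (by field_simp; ring)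
    have heq : ((v - w) / (v * (1 - w))) • P.xstar + (w * (1 - v) / (v * (1 - w))) •
        (P.e0 + w⁻¹ • (P.xstar - P.e0)) = P.e0 + v⁻¹ • (P.xstar - P.e0) := by
      match_scalars <;> field_simp <;> ring
    rw [heq] at h1
    have h2 := hub _ h1
    have h3 : v * ((v - w) / (v * (1 - w)) * p + w * (1 - v) / (v * (1 - w)) * ε)
        = ((v - w) * p + w * (1 - v) * ε) / (1 - w) := by field_simp
    rw [h3, div_le_one hw1'] at h2
    have h4 : 0 ≤ w * (1 - v) * ε := by positivity
    nlinarith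

end MultiRadial
end
end

section
/- Let S ⊆ E be convex with e ∈ int S and R_e(S) > 0. Then φ_S is convex and (1/R_e(S))-Lipschitz continuous on E. -/
/-!
Write `h t` for the scalar profile `t` (if `1 < t`), `t ^ 2 / 2 + 1 / 2` (otherwise), so that
`φ_S = h ∘ γ_{S,e}`. For every slope `s ∈ [0, 1]` the affine function `s t + (1 - s ^ 2) / 2` lies
below `h`, and it touches `h` at every `m ≥ 0` with `min m 1 = s`
(`MultiRadial.huber_add_min_mul_sub_le`). Since these slopes are nonnegative, `h` is convex and
nondecreasing on `[0, ∞)`, and since they are at most `1`, `h` is `1`-Lipschitz there.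

It remains to see that `γ_{S,e}` is convex and `1 / R_e(S)`-Lipschitz. It is Mathlib's `gauge` of
the translate `S - e`, evaluated at `x - e`; that translate is convex and contains the open ball of
radius `R_e(S)` around `0`, so both facts are standard properties of the Minkowski functional.
-/


open Set Filter Topology Classical

noncomputable section

namespace MultiRadial

variable {E : Type*} [NormedAddCommGroup E] [InnerProductSpace ℝ E] [FiniteDimensional ℝ E]

/-- The Huber-smoothed gauge `φ_S(x) = γ_{S,e}(x)` if `γ_{S,e}(x) > 1`,
and `γ_{S,e}(x)²/2 + 1/2` otherwise. -/
def huberGauge (S : Set E) (e x : E) : ℝ :=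
  if 1 < gaugeFrom S e x then gaugeFrom S e x else (gaugeFrom S e x) ^ 2 / 2 + 1 / 2

lemma gaugeFrom_eq_gauge (S : Set E) (e x : E) :
    gaugeFrom S e x = gauge ((fun z => e + z) ⁻¹' S) (x - e) := by
  rw [gauge_def']
  rfl

lemma gaugeFrom_nonneg (S : Set E) (e x : E) : 0 ≤ gaugeFrom S e x := by
  rw [gaugeFrom_eq_gauge]
  exact gauge_nonneg _

lemma ball_innerRadius_subset (S : Set E) (e : E) :
    Metric.ball (0 : E) (innerRadius S e) ⊆ (fun z => e + z) ⁻¹' S := by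
  intro z hz
  by_contra hzS
  have hle : innerRadius S e ≤ ‖z‖ := by
    refine csInf_le ⟨0, ?_⟩ ⟨e + z, hzS, by simp⟩
    rintro _ ⟨x, -, rfl⟩
    exact norm_nonneg _
  exact absurd (mem_ball_zero_iff.1 hz) (not_lt.2 hle)

lemma gaugeFrom_convexOn {S : Set E} {e : E} (hS : Convex ℝ S) (hR : 0 < innerRadius S e) :
    ConvexOn ℝ Set.univ (gaugeFrom S e) := by
  have habs : Absorbent ℝ ((fun z => e + z) ⁻¹' S) :=
    (absorbent_ball_zero hR).mono (ball_innerRadius_subset S e)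
  refine ⟨convex_univ, fun x _ y _ a b ha hb hab => ?_⟩
  have hxy : a • x + b • y - e = a • (x - e) + b • (y - e) := by
    calc a • x + b • y - e = a • x + b • y - (a + b) • e := by rw [hab, one_smul]
      _ = a • (x - e) + b • (y - e) := by module
  simp only [gaugeFrom_eq_gauge]
  rw [hxy, ← gauge_smul_of_nonneg ha, ← gauge_smul_of_nonneg hb]
  exact gauge_add_le (hS.translate_preimage_right e) habs _ _

lemma abs_gaugeFrom_sub_le {S : Set E} {e : E} (hS : Convex ℝ S) (hR : 0 < innerRadius S e)
    (x y : E) : |gaugeFrom S e x - gaugeFrom S e y| ≤ (innerRadius S e)⁻¹ * ‖x - y‖ := by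
  have hlip := Convex.lipschitzWith_gauge (r := ⟨innerRadius S e, hR.le⟩)
    (hS.translate_preimage_right e) hR (ball_innerRadius_subset S e)
  have h := hlip.dist_le_mul (x - e) (y - e)
  rw [dist_sub_right, dist_eq_norm x y, Real.dist_eq] at h
  rw [gaugeFrom_eq_gauge, gaugeFrom_eq_gauge]
  exact h

/-- The subgradient inequality for the scalar profile `h` of the Huber-smoothed gauge: the line
through `(m, h m)` with slope `min m 1` lies below the graph of `h`. -/
lemma huber_add_min_mul_sub_le (m t : ℝ) :
    (if 1 < m then m else m ^ 2 / 2 + 1 / 2) + min m 1 * (t - m) ≤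
      if 1 < t then t else t ^ 2 / 2 + 1 / 2 := by
  rcases lt_or_ge 1 m with h1 | h1
  · rw [if_pos h1, min_eq_right h1.le]
    split_ifs <;> nlinarith [sq_nonneg (t - 1)]
  · rw [if_neg (not_lt.2 h1), min_eq_left h1]
    split_ifs with h2
    · nlinarith [mul_nonneg (sub_nonneg.2 h1) (sub_nonneg.2 h2.le), sq_nonneg (m - 1)]
    · nlinarith [sq_nonneg (t - m)]

lemma huberGauge_add_le (S : Set E) (e z x : E) :
    huberGauge S e z + min (gaugeFrom S e z) 1 * (gaugeFrom S e x - gaugeFrom S e z) ≤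
      huberGauge S e x :=
  huber_add_min_mul_sub_le _ _

lemma huberGauge_sub_le_abs (S : Set E) (e x y : E) :
    huberGauge S e x - huberGauge S e y ≤ |gaugeFrom S e x - gaugeFrom S e y| := by
  have h := huberGauge_add_le S e x y
  have h0 : 0 ≤ min (gaugeFrom S e x) 1 := le_min (gaugeFrom_nonneg S e x) zero_le_one
  have h1 : min (gaugeFrom S e x) 1 ≤ 1 := min_le_right _ _
  nlinarith [mul_le_mul_of_nonneg_left (le_abs_self (gaugeFrom S e x - gaugeFrom S e y)) h0,
    mul_le_mul_of_nonneg_right h1 (abs_nonneg (gaugeFrom S e x - gaugeFrom S e y))]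

/-- part of Lemma 3 of the paper: for convex `S` with `e ∈ int S` and
`R_e(S) > 0`, the function `φ_S` is convex and `1/R_e(S)`-Lipschitz on `E`. -/
theorem statement13 (S : Set E) (e : E) (hS : Convex ℝ S) (he : e ∈ interior S)
    (hR : 0 < innerRadius S e) :
    ConvexOn ℝ Set.univ (huberGauge S e) ∧
      LipschitzWith ((innerRadius S e)⁻¹).toNNReal (huberGauge S e) := by
  refine ⟨⟨convex_univ, fun x _ y _ a b ha hb hab => ?_⟩,
    LipschitzWith.of_dist_le_mul fun x y => ?_⟩
  · -- Average the subgradient inequalities at `z` and use convexity of the gauge there.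
    set z := a • x + b • y
    have hγ := (gaugeFrom_convexOn hS hR).2 (mem_univ x) (mem_univ y) ha hb hab
    simp only [smul_eq_mul] at hγ ⊢
    have hs : 0 ≤ min (gaugeFrom S e z) 1 := le_min (gaugeFrom_nonneg S e z) zero_le_one
    have hx := mul_le_mul_of_nonneg_left (huberGauge_add_le S e z x) ha
    have hy := mul_le_mul_of_nonneg_left (huberGauge_add_le S e z y) hb
    have hmul := mul_le_mul_of_nonneg_left hγ hs
    obtain rfl : b = 1 - a := by linarith
    linarith
  · rw [Real.coe_toNNReal _ (inv_nonneg.2 hR.le), Real.dist_eq, dist_eq_norm]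
    refine le_trans (abs_le'.2 ⟨huberGauge_sub_le_abs S e x y, ?_⟩)
      (abs_gaugeFrom_sub_le hS hR x y)
    rw [neg_sub, abs_sub_comm]
    exact huberGauge_sub_le_abs S e y x

end MultiRadial
end
end

section
/- Let S ⊆ E be convex with e ∈ int S. For every μ > 0 and every x ∈ E, inf_{y ∈ E} [γ_{S,e}(y) + (1/(2μ))·γ_{S,e}(e + x − y)²] equals γ_{S,e}(x) − μ/2 if γ_{S,e}(x) > μ, and equals γ_{S,e}(x)²/(2μ) otherwise. In particular, φ_S(x) = 1/2 + inf_{y ∈ E} [γ_{S,e}(y) + (1/2)·γ_{S,e}(e + x − y)²] for all x ∈ E. -/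
/-!
Centre at `e`: the gauge of `S` with respect to `e` is the Minkowski gauge `g` of `S - e`, a convex
neighbourhood of `0`, so `g` is nonnegative, positively homogeneous and subadditive.
With `G = g z`, `a = g w`, `b = g (z - w)` we have `G ≤ a + b`, so `a + b² / (2μ)` is bounded
below by the minimum of the scalar Huber problem: if `μ < G`, use `b² / (2μ) ≥ b - μ / 2`;
if `G ≤ μ`, use `G² - b² = (G - b)(G + b) ≤ 2μa` when `b ≤ G`, and monotonicity otherwise.
The bound is attained on the ray through `z`, at `w = (1 - μ / G) z` and `w = 0` respectively.
-/

open Set Filter Topology Classical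

noncomputable section

namespace MultiRadial

variable {E : Type*} [NormedAddCommGroup E] [InnerProductSpace ℝ E] [FiniteDimensional ℝ E]

/-- The infimal convolution of a sublinear gauge with its scaled square, in centred coordinates:
the closed form is an attained minimum. -/
lemma isLeast_infConv {T : Set E} (hT : Convex ℝ T) (hA : Absorbent ℝ T) {μ : ℝ} (hμ : 0 < μ)
    (z : E) :
    IsLeast (range fun w : E => gauge T w + 1 / (2 * μ) * gauge T (z - w) ^ 2)
      (if μ < gauge T z then gauge T z - μ / 2 else gauge T z ^ 2 / (2 * μ)) := by
  constructor
  · split_ifs with h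
    · have hG : 0 < gauge T z := hμ.trans h
      -- On the ray through `z`, the residual is scaled so that its gauge is exactly `μ`.
      refine ⟨(1 - μ / gauge T z) • z, ?_⟩
      have hr : z - (1 - μ / gauge T z) • z = (μ / gauge T z) • z := by
        rw [sub_smul, one_smul, sub_sub_cancel]
      have h1 : 0 ≤ 1 - μ / gauge T z := by
        rw [sub_nonneg, div_le_one hG]
        exact h.le
      have h2 : 0 ≤ μ / gauge T z := by positivity
      simp only [hr, gauge_smul_of_nonneg h1, gauge_smul_of_nonneg h2, smul_eq_mul]
      field_simp
      ring
    · refine ⟨0, ?_⟩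
      simp only [gauge_zero, sub_zero]
      ring
  · rintro _ ⟨w, rfl⟩
    have ha : 0 ≤ gauge T w := gauge_nonneg w
    have hb : 0 ≤ gauge T (z - w) := gauge_nonneg _
    have hab : gauge T z ≤ gauge T w + gauge T (z - w) := by
      simpa using gauge_add_le hT hA w (z - w)
    have hG : 0 ≤ gauge T z := gauge_nonneg z
    dsimp only
    generalize gauge T w = a at *
    generalize gauge T (z - w) = b at *
    generalize gauge T z = G at *
    rw [one_div_mul_eq_div]
    split_ifs with h
    · have : b - μ / 2 ≤ b ^ 2 / (2 * μ) := by
        rw [le_div_iff₀ (by positivity)]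
        nlinarith [sq_nonneg (b - μ)]
      linarith
    · push Not at h
      rw [div_le_iff₀ (by positivity), add_mul, div_mul_cancel₀ _ (by positivity)]
      rcases le_total G b with hGb | hGb
      · have : 0 ≤ a * (2 * μ) := by positivity
        nlinarith
      · -- Here `G ^ 2 - b ^ 2 = (G - b) * (G + b) ≤ a * (2 * μ)`, factor by factor.
        have : (G - b) * (G + b) ≤ a * (2 * μ) :=
          mul_le_mul (by linarith) (by linarith) (by linarith) ha
        linarith

/-- equation (23) of the paper: for convex `S` with `e ∈ int S`,
for every `μ > 0` and `x`, the infimal convolution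
`inf_y [γ_{S,e}(y) + (1/(2μ)) γ_{S,e}(e + x - y)²]` equals `γ_{S,e}(x) - μ/2` when
`γ_{S,e}(x) > μ` and `γ_{S,e}(x)²/(2μ)` otherwise; in particular
`φ_S(x) = 1/2 + inf_y [γ_{S,e}(y) + (1/2) γ_{S,e}(e + x - y)²]`. -/
theorem statement14 (S : Set E) (e : E) (hS : Convex ℝ S) (he : e ∈ interior S) :
    (∀ μ : ℝ, 0 < μ → ∀ x : E,
      (⨅ y : E, gaugeFrom S e y + 1 / (2 * μ) * (gaugeFrom S e (e + x - y)) ^ 2) =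
        if μ < gaugeFrom S e x then gaugeFrom S e x - μ / 2
        else (gaugeFrom S e x) ^ 2 / (2 * μ)) ∧
    ∀ x : E, huberGauge S e x =
      1 / 2 + ⨅ y : E, gaugeFrom S e y + 1 / 2 * (gaugeFrom S e (e + x - y)) ^ 2 := by
  have main : ∀ μ : ℝ, 0 < μ → ∀ x : E,
      (⨅ y : E, gaugeFrom S e y + 1 / (2 * μ) * (gaugeFrom S e (e + x - y)) ^ 2) =
        if μ < gaugeFrom S e x then gaugeFrom S e x - μ / 2
        else (gaugeFrom S e x) ^ 2 / (2 * μ) := by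
    intro μ hμ x
    have hT : Convex ℝ ((fun z => e + z) ⁻¹' S) := hS.translate_preimage_right e
    have hA : Absorbent ℝ ((fun z => e + z) ⁻¹' S) := by
      apply absorbent_nhds_zero
      apply (continuous_const.add continuous_id).continuousAt.preimage_mem_nhds
      simpa using mem_interior_iff_mem_nhds.mp he
    simp only [gaugeFrom_eq_gauge]
    rw [← (isLeast_infConv hT hA hμ (x - e)).csInf_eq, sInf_range]
    refine (Equiv.subRight e).iInf_congr fun y => ?_
    have h : x - e - (y - e) = e + x - y - e := by abel
    simp only [Equiv.subRight_apply, h]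
  refine ⟨main, fun x => ?_⟩
  have h := main 1 one_pos x
  rw [mul_one] at h
  rw [h, huberGauge]
  split_ifs <;> ring

end MultiRadial
end
end

section
/- Let S ⊆ E be convex with e ∈ int S. If the function x ↦ (1/2)·γ_{S,e}(x)² is differentiable on E with L-Lipschitz continuous gradient, then φ_S is differentiable on E with L-Lipschitz continuous gradient. -/
/-!
Write `γ` for the gauge and `f = γ² / 2`. The smoothed gauge has two variational descriptions:
`φ = min_{t ≥ 1} (f / t + t / 2)`, attained at `t = max 1 γ`, and
`φ = max_{q ∈ [0, 1]} (q γ + (1 - q²) / 2)`, attained at `q = min 1 γ`.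

The second exhibits `φ` as a supremum of convex functions, hence convex. The first transfers the
quadratic upper bound of the `L`-smooth function `f` to `φ`: with `t = max 1 (γ x)`,
`φ y - φ x ≤ (f y - f x) / t ≤ (f' x / t) (y - x) + (L / (2 t)) ‖y - x‖²`, and `L / t ≤ L`.

A convex function `F` with a bound `F y ≤ F x + g x (y - x) + (L / 2) ‖y - x‖²` for all `x, y` is
differentiable with derivative `g`, since reflecting `y` through `x` gives the matching lower
bound, and `g` is `L`-Lipschitz by the usual co-coercivity argument.
-/

open Set Filter Topology Classical

noncomputable section

namespace MultiRadial

variable {E : Type*} [NormedAddCommGroup E] [InnerProductSpace ℝ E] [FiniteDimensional ℝ E]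

/-- The descent lemma: a function with `L`-Lipschitz derivative lies below its quadratic models. -/
lemma descent {f : E → ℝ} {L : NNReal} (hf : Differentiable ℝ f)
    (hL : LipschitzWith L (fderiv ℝ f)) (x y : E) :
    f y ≤ f x + fderiv ℝ f x (y - x) + L / 2 * ‖y - x‖ ^ 2 := by
  set v := y - x with hv
  let k : ℝ → ℝ := fun t => f (x + t • v) - t * fderiv ℝ f x v - L / 2 * ‖v‖ ^ 2 * t ^ 2
  have hk : ∀ t : ℝ, HasDerivAt k
      (fderiv ℝ f (x + t • v) v - fderiv ℝ f x v - L * ‖v‖ ^ 2 * t) t := by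
    intro t
    have h1 : HasDerivAt (fun t : ℝ => x + t • v) v t := by
      simpa using ((hasDerivAt_id t).smul_const v).const_add x
    have h2 := (hf (x + t • v)).hasFDerivAt.comp_hasDerivAt t h1
    have h3 := (hasDerivAt_id t).mul_const (fderiv ℝ f x v)
    have h4 := ((hasDerivAt_id t).pow 2).const_mul (L / 2 * ‖v‖ ^ 2 : ℝ)
    refine ((h2.sub h3).sub h4).congr_deriv ?_
    simp
    ring
  have hanti : AntitoneOn k (Icc 0 1) := by
    refine antitoneOn_of_deriv_nonpos (convex_Icc 0 1)
      (fun t _ => (hk t).continuousAt.continuousWithinAt)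
      (fun t _ => (hk t).differentiableAt.differentiableWithinAt) ?_
    intro t ht
    rw [interior_Icc] at ht
    rw [(hk t).deriv]
    have h1 : ‖fderiv ℝ f (x + t • v) - fderiv ℝ f x‖ ≤ L * (t * ‖v‖) := by
      have := hL.dist_le_mul (x + t • v) x
      rwa [dist_eq_norm, dist_eq_norm, add_sub_cancel_left, norm_smul, Real.norm_of_nonneg ht.1.le]
        at this
    have h2 := (le_abs_self _).trans
      ((fderiv ℝ f (x + t • v) - fderiv ℝ f x).le_of_opNorm_le h1 v)
    rw [sub_apply] at h2
    nlinarith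
  have h := hanti (left_mem_Icc.2 zero_le_one) (right_mem_Icc.2 zero_le_one) zero_le_one
  simp only [k, one_smul, zero_smul, hv] at h
  simp only [add_sub_cancel, add_zero] at h
  rw [← hv] at h
  linarith

/-- Under a quadratic upper bound by the models `g x`, these are subgradients of a convex `F`. -/
lemma subgradient {F : E → ℝ} {g : E → E →L[ℝ] ℝ} {L : NNReal} (hF : ConvexOn ℝ univ F)
    (hq : ∀ x y, F y ≤ F x + g x (y - x) + L / 2 * ‖y - x‖ ^ 2) (x y : E) :
    F x + g x (y - x) ≤ F y := by
  have hrefl : ∀ z, F x + g x (z - x) - L / 2 * ‖z - x‖ ^ 2 ≤ F z := by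
    intro z
    have h1 := hq x (x - (z - x))
    have h2 := hF.2 (mem_univ z) (mem_univ (x - (z - x))) (by norm_num : (0 : ℝ) ≤ 1 / 2)
      (by norm_num : (0 : ℝ) ≤ 1 / 2) (by norm_num)
    have h3 : (1 / 2 : ℝ) • z + (1 / 2 : ℝ) • (x - (z - x)) = x := by module
    have h4 : x - (z - x) - x = -(z - x) := by abel
    rw [h3] at h2
    rw [h4, map_neg, norm_neg] at h1
    simp only [smul_eq_mul] at h2
    linarith
  -- The quadratic error at `x + t (y - x)` is `O(t²)`, so it disappears to first order as `t → 0`.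
  have key : ∀ t ∈ Ioo (0 : ℝ) 1, F x + g x (y - x) - L / 2 * ‖y - x‖ ^ 2 * t ≤ F y := by
    intro t ht
    have h1 := hrefl (x + t • (y - x))
    have h2 := hF.2 (mem_univ x) (mem_univ y) (sub_nonneg.2 ht.2.le) ht.1.le (by ring)
    have h3 : (1 - t) • x + t • y = x + t • (y - x) := by module
    rw [h3] at h2
    rw [add_sub_cancel_left, map_smul, norm_smul, Real.norm_of_nonneg ht.1.le] at h1
    simp only [smul_eq_mul] at h1 h2
    refine le_of_mul_le_mul_left ?_ ht.1
    nlinarith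
  have hlim : Tendsto (fun t : ℝ => F x + g x (y - x) - L / 2 * ‖y - x‖ ^ 2 * t) (𝓝[>] 0)
      (𝓝 (F x + g x (y - x))) := by
    have : Continuous (fun t : ℝ => F x + g x (y - x) - L / 2 * ‖y - x‖ ^ 2 * t) := by fun_prop
    simpa using (this.tendsto 0).mono_left nhdsWithin_le_nhds
  exact le_of_tendsto hlim (Filter.mem_of_superset (Ioo_mem_nhdsGT one_pos) key)

lemma hasFDerivAt_of_bounds {F : E → ℝ} {g : E → E →L[ℝ] ℝ} {L : NNReal}
    (hF : ConvexOn ℝ univ F)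
    (hq : ∀ x y, F y ≤ F x + g x (y - x) + L / 2 * ‖y - x‖ ^ 2) (x : E) :
    HasFDerivAt F (g x) x := by
  rw [hasFDerivAt_iff_isLittleO]
  have hO : (fun y => F y - F x - g x (y - x)) =O[𝓝 x] fun y => ‖y - x‖ ^ 2 := by
    refine Asymptotics.IsBigO.of_bound (L / 2) (Filter.Eventually.of_forall fun y => ?_)
    have h1 := hq x y
    have h2 := subgradient hF hq x y
    rw [Real.norm_of_nonneg (by linarith), Real.norm_of_nonneg (by positivity)]
    linarith
  exact hO.trans_isLittleO (Asymptotics.isLittleO_pow_sub_sub x one_lt_two)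

/-- Co-coercivity: under a quadratic upper bound, the gradient map of a convex function is
Lipschitz with the same constant. -/
lemma lipschitz_of_bounds {F : E → ℝ} {g : E → E →L[ℝ] ℝ} {L : NNReal}
    (hF : ConvexOn ℝ univ F)
    (hq : ∀ x y, F y ≤ F x + g x (y - x) + L / 2 * ‖y - x‖ ^ 2) :
    LipschitzWith L g := by
  have := FiniteDimensional.complete ℝ E
  refine LipschitzWith.of_dist_le_mul fun y x => ?_
  rw [dist_eq_norm, dist_eq_norm]
  have key : ∀ w, 2 * (g y - g x) w - L * ‖w‖ ^ 2 ≤ (g y - g x) (y - x) := by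
    intro w
    -- Compare the model at `y` with the subgradient at `x` at the point `y - w`, and symmetrically
    -- at the point `x + w`.
    have h1 := hq y (y - w)
    have h2 := subgradient hF hq x (y - w)
    have h3 := hq x (x + w)
    have h4 := subgradient hF hq y (x + w)
    have e1 : y - w - y = -w := by abel
    rw [e1, map_neg, norm_neg] at h1
    rw [add_sub_cancel_left] at h3
    simp only [map_sub, map_add, sub_apply] at *
    linarith
  set a := (InnerProductSpace.toDual ℝ E).symm (g y - g x) with ha
  have hna : ‖g y - g x‖ = ‖a‖ := by rw [ha, LinearIsometryEquiv.norm_map]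
  have hinner : ∀ w, (g y - g x) w = inner ℝ a w := fun w => by
    rw [ha, InnerProductSpace.toDual_symm_apply]
  rw [hna]
  by_cases ha0 : ‖a‖ = 0
  · rw [ha0]; positivity
  have hapos : 0 < ‖a‖ := lt_of_le_of_ne (norm_nonneg a) (Ne.symm ha0)
  have key2 : ∀ s : ℝ, 2 * s * ‖a‖ - L * s ^ 2 * ‖a‖ ≤ ‖y - x‖ := by
    intro s
    have h1 := key (s • a)
    rw [hinner, hinner, inner_smul_right, real_inner_self_eq_norm_sq, norm_smul, mul_pow,
      Real.norm_eq_abs, sq_abs] at h1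
    have h2 := real_inner_le_norm a (y - x)
    refine le_of_mul_le_mul_left ?_ hapos
    nlinarith
  rcases eq_or_lt_of_le L.coe_nonneg with hL | hL
  · -- For `L = 0` the inequality would bound `s ↦ 2 s ‖a‖` uniformly in `s`.
    have h := key2 ((‖y - x‖ + 1) / ‖a‖)
    rw [← hL, mul_assoc, div_mul_cancel₀ _ ha0] at h
    have := norm_nonneg (y - x)
    linarith
  · have h := key2 ((L : ℝ)⁻¹)
    have h2 : 2 * (L : ℝ)⁻¹ * ‖a‖ - L * (L : ℝ)⁻¹ ^ 2 * ‖a‖ = ‖a‖ / L := by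
      field_simp
      ring
    rw [h2, div_le_iff₀ hL] at h
    linarith

lemma gaugeFrom_eq (S : Set E) (e x : E) :
    gaugeFrom S e x = gauge ((fun z => z + e) ⁻¹' S) (x - e) := by
  rw [gauge_def']
  simp only [gaugeFrom, mem_Ioi, mem_preimage, add_comm e]

lemma convexOn_gaugeFrom {S : Set E} {e : E} (hS : Convex ℝ S) (he : e ∈ interior S) :
    ConvexOn ℝ univ (gaugeFrom S e) := by
  have hT : Convex ℝ ((fun z => z + e) ⁻¹' S) := hS.translate_preimage_left e
  have hnhds : (fun z => z + e) ⁻¹' S ∈ 𝓝 (0 : E) := by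
    have hc : ContinuousAt (fun z : E => z + e) 0 := by fun_prop
    apply hc
    simp only [zero_add]
    exact mem_interior_iff_mem_nhds.1 he
  refine ⟨convex_univ, fun x _ y _ a b ha hb hab => ?_⟩
  have h : a • x + b • y - e = a • (x - e) + b • (y - e) := by
    have : e = (a + b) • e := by rw [hab, one_smul]
    nth_rewrite 1 [this]
    module
  rw [gaugeFrom_eq, gaugeFrom_eq, gaugeFrom_eq, h]
  refine (gauge_add_le hT (absorbent_nhds_zero hnhds) _ _).trans ?_
  rw [gauge_smul_of_nonneg ha, gauge_smul_of_nonneg hb]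

/-- Dual description of `φ`: a lower bound by affine functions of the gauge. -/
lemma le_huberGauge (S : Set E) (e x : E) {q : ℝ} (hq1 : q ≤ 1) :
    q * gaugeFrom S e x + (1 - q ^ 2) / 2 ≤ huberGauge S e x := by
  unfold huberGauge
  split_ifs with h
  · nlinarith [mul_nonneg (sub_nonneg.2 hq1) (sub_nonneg.2 h.le), sq_nonneg (1 - q)]
  · nlinarith [sq_nonneg (q - gaugeFrom S e x)]

lemma huberGauge_eq_min (S : Set E) (e x : E) :
    huberGauge S e x =
      min 1 (gaugeFrom S e x) * gaugeFrom S e x + (1 - min 1 (gaugeFrom S e x) ^ 2) / 2 := by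
  unfold huberGauge
  split_ifs with h
  · rw [min_eq_left h.le]; ring
  · rw [min_eq_right (not_lt.1 h)]; ring

lemma convexOn_huberGauge {S : Set E} {e : E} (hS : Convex ℝ S) (he : e ∈ interior S) :
    ConvexOn ℝ univ (huberGauge S e) := by
  refine ⟨convex_univ, fun x _ y _ a b ha hb hab => ?_⟩
  have hconv := (convexOn_gaugeFrom hS he).2 (mem_univ x) (mem_univ y) ha hb hab
  rw [huberGauge_eq_min S e (a • x + b • y)]
  have hq1 : min 1 (gaugeFrom S e (a • x + b • y)) ≤ 1 := min_le_left _ _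
  have hq0 : 0 ≤ min 1 (gaugeFrom S e (a • x + b • y)) :=
    le_min zero_le_one (gaugeFrom_nonneg _ _ _)
  generalize min 1 (gaugeFrom S e (a • x + b • y)) = q at hq0 hq1 ⊢
  have hx := mul_le_mul_of_nonneg_left (le_huberGauge S e x hq1) ha
  have hy := mul_le_mul_of_nonneg_left (le_huberGauge S e y hq1) hb
  have hz := mul_le_mul_of_nonneg_left hconv hq0
  simp only [smul_eq_mul] at hz ⊢
  have hb' : b = 1 - a := by linarith
  subst hb'
  linarith

/-- Primal description of `φ`: an upper bound by scalings of half the squared gauge. -/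
lemma huberGauge_le (S : Set E) (e x : E) {t : ℝ} (ht : 1 ≤ t) :
    huberGauge S e x ≤ t⁻¹ * ((1 / 2 : ℝ) * (gaugeFrom S e x) ^ 2) + t / 2 := by
  have ht0 : 0 < t := by linarith
  rw [inv_mul_eq_div, div_add_div _ _ ht0.ne' two_ne_zero, le_div_iff₀ (by positivity)]
  have h0 := gaugeFrom_nonneg S e x
  unfold huberGauge
  split_ifs with h
  · nlinarith [sq_nonneg (gaugeFrom S e x - t)]
  · have h1 : gaugeFrom S e x ^ 2 ≤ 1 := by nlinarith
    nlinarith [mul_nonneg (sub_nonneg.2 ht) (sub_nonneg.2 h1), mul_nonneg (sub_nonneg.2 ht) ht0.le]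

lemma huberGauge_eq_max (S : Set E) (e x : E) :
    huberGauge S e x = (max 1 (gaugeFrom S e x))⁻¹ * ((1 / 2 : ℝ) * (gaugeFrom S e x) ^ 2)
      + max 1 (gaugeFrom S e x) / 2 := by
  unfold huberGauge
  split_ifs with h
  · rw [max_eq_right h.le]
    have : gaugeFrom S e x ≠ 0 := by linarith
    field_simp
    ring
  · rw [max_eq_left (not_lt.1 h)]; ring

/-- part of Lemma 3 of the paper: for convex `S` with `e ∈ int S`, if
`x ↦ (1/2) γ_{S,e}(x)²` is differentiable with `L`-Lipschitz gradient, then so is `φ_S`. -/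
theorem statement15 (S : Set E) (e : E) (hS : Convex ℝ S) (he : e ∈ interior S)
    (L : NNReal)
    (hdiff : Differentiable ℝ (fun x => (1 / 2 : ℝ) * (gaugeFrom S e x) ^ 2))
    (hlip : LipschitzWith L (fderiv ℝ (fun x => (1 / 2 : ℝ) * (gaugeFrom S e x) ^ 2))) :
    Differentiable ℝ (huberGauge S e) ∧
      LipschitzWith L (fderiv ℝ (huberGauge S e)) := by
  set f : E → ℝ := fun x => (1 / 2 : ℝ) * (gaugeFrom S e x) ^ 2 with hf
  let g : E → E →L[ℝ] ℝ := fun x => (max 1 (gaugeFrom S e x))⁻¹ • fderiv ℝ f x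
  have hF := convexOn_huberGauge hS he
  have hq : ∀ x y, huberGauge S e y ≤
      huberGauge S e x + g x (y - x) + L / 2 * ‖y - x‖ ^ 2 := by
    intro x y
    have ht : (1 : ℝ) ≤ max 1 (gaugeFrom S e x) := le_max_left _ _
    have h1 := huberGauge_le S e y ht
    have h2 := huberGauge_eq_max S e x
    have hgx : g x (y - x) = (max 1 (gaugeFrom S e x))⁻¹ * fderiv ℝ f x (y - x) := rfl
    rw [hgx]
    generalize max 1 (gaugeFrom S e x) = t at ht h1 h2 ⊢
    have hi0 : 0 ≤ t⁻¹ := by positivity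
    have hi1 : t⁻¹ ≤ 1 := inv_le_one_of_one_le₀ ht
    have h3 := mul_le_mul_of_nonneg_left (descent hdiff hlip x y) hi0
    have h4 : t⁻¹ * (L / 2 * ‖y - x‖ ^ 2) ≤ L / 2 * ‖y - x‖ ^ 2 :=
      mul_le_of_le_one_left (by positivity) hi1
    simp only [hf] at h3 ⊢
    linarith
  have hd := hasFDerivAt_of_bounds hF hq
  refine ⟨fun x => (hd x).differentiableAt, ?_⟩
  have hg : fderiv ℝ (huberGauge S e) = g := funext fun x => (hd x).fderiv
  rw [hg]
  exact lipschitz_of_bounds hF hq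

end MultiRadial
end
end

section
/- Suppose hypo f is convex, f is u.s.c. on all of E, e0 ∈ int(dom f), and D0 := D(S0) < ∞. Then every y ∈ E satisfies f^{Γ,e0}(y) ≥ γ_{S0,e0}(y) ≥ ‖y − e0‖/D0. -/
/-!
Convexity of `hypo f` propagates an infinite value: if `f x = ⊤` and `f e0 > 0`, then `f = ⊤` at
every point of the segment from `e0` to `x` other than `e0`. Such points lie arbitrarily close
to `e0`, so `e0 ∈ int (dom f)` forces `f` to be finite everywhere (`ne_top_of_convex_hypo`), and
hence to vanish off `S0 = cl (dom f)`. If `0 < v < γ_{S0,e0}(y)`, the point `e0 + (y - e0)/v` is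
not in `S0`, so `v` is admissible in the supremum defining `f^{Γ,e0}(y)`; letting `v` increase to
the gauge gives the first inequality.

For the second, every `v` admissible in the gauge places `e0` and `e0 + (y - e0)/v` in `S0`,
so `‖y - e0‖ / v ≤ D0`. Admissible `v` exist because `e0` is interior, so the real infimum is
a genuine one.
-/

open Set Filter Topology Classical

noncomputable section

namespace MultiRadial

variable {E : Type*} [NormedAddCommGroup E] [InnerProductSpace ℝ E] [FiniteDimensional ℝ E]

/-- A function with convex hypograph that is positive and finite near `e0` is finite everywhere. -/
theorem ne_top_of_convex_hypo {f : E → ENNReal} {e0 : E} (hconc : Convex ℝ (hypo f))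
    (he0 : e0 ∈ interior (edom f)) (x : E) : f x ≠ ⊤ := by
  intro hx
  have hcont : Tendsto (fun t : ℝ => (1 - t) • e0 + t • x) (𝓝[>] 0) (𝓝 e0) := by
    have h : Continuous (fun t : ℝ => (1 - t) • e0 + t • x) := by fun_prop
    have h0 := h.tendsto 0
    simp only [sub_zero, one_smul, zero_smul, add_zero] at h0
    exact h0.mono_left nhdsWithin_le_nhds
  obtain ⟨t, htm, ht0, ht1⟩ := ((hcont.eventually (mem_interior_iff_mem_nhds.1 he0)).and
    (Ioo_mem_nhdsGT (show (0 : ℝ) < 1 by norm_num))).exists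
  obtain ⟨h0, htop⟩ := interior_subset he0
  have hu0 : 0 < (f e0).toReal := ENNReal.toReal_pos h0 htop
  set p := (1 - t) • e0 + t • x with hp
  have hM : 0 ≤ (f p).toReal := ENNReal.toReal_nonneg
  have he : ((e0, (f e0).toReal) : E × ℝ) ∈ hypo f := ⟨hu0, (ENNReal.ofReal_toReal htop).le⟩
  -- The height over `x` is chosen so that its weight-`t` share alone exceeds `f p`.
  have hxs : ((x, ((f p).toReal + 1) / t) : E × ℝ) ∈ hypo f :=
    ⟨by dsimp only; positivity, by simp [hx]⟩
  have hc := (hconc he hxs (sub_nonneg.2 ht1.le) ht0.le (by ring)).2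
  simp only [Prod.fst_add, Prod.snd_add, Prod.smul_fst, Prod.smul_snd, smul_eq_mul,
    ← hp] at hc
  rw [ENNReal.ofReal_le_iff_le_toReal htm.2, mul_div_cancel₀ _ ht0.ne'] at hc
  nlinarith [mul_nonneg (sub_nonneg.2 ht1.le) hu0.le]

/-- if `hypo f` is convex, `f` is u.s.c. on `E`, `e0 ∈ int (dom f)`,
and `D0 = D(S0) < ∞`, then every `y` satisfies
`f^{Γ,e0}(y) ≥ γ_{S0,e0}(y) ≥ ‖y - e0‖ / D0`. -/
theorem statement17 (f : E → ENNReal) (e0 : E)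
    (hconc : Convex ℝ (hypo f)) (husc : UpperSemicontinuous f)
    (he0 : e0 ∈ interior (edom f)) (hD : EMetric.diam (closure (edom f)) ≠ ⊤)
    (y : E) :
    ENNReal.ofReal (gaugeFrom (closure (edom f)) e0 y) ≤ radTrans f e0 y ∧
      ‖y - e0‖ / Metric.diam (closure (edom f)) ≤ gaugeFrom (closure (edom f)) e0 y := by
  have hmem : e0 ∈ closure (edom f) := subset_closure (interior_subset he0)
  have hbdd : BddBelow {v : ℝ | 0 < v ∧ e0 + v⁻¹ • (y - e0) ∈ closure (edom f)} :=
    ⟨0, fun v hv => hv.1.le⟩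
  constructor
  · refine le_of_forall_lt_imp_le_of_dense fun a ha => ?_
    have hatop : a ≠ ⊤ := ha.ne_top
    rcases eq_or_ne a 0 with rfl | ha0
    · exact zero_le
    have hv0 : 0 < a.toReal := ENNReal.toReal_pos ha0 hatop
    have hvg : a.toReal < gaugeFrom (closure (edom f)) e0 y :=
      (ENNReal.lt_ofReal_iff_toReal_lt hatop).1 ha
    have hnot : e0 + (a.toReal)⁻¹ • (y - e0) ∉ closure (edom f) := fun h =>
      absurd (csInf_le hbdd ⟨hv0, h⟩) (not_le.2 hvg)
    have hf : f (e0 + (a.toReal)⁻¹ • (y - e0)) = 0 := by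
      by_contra h
      exact hnot (subset_closure ⟨h, ne_top_of_convex_hypo hconc he0 _⟩)
    rw [← ENNReal.ofReal_toReal hatop]
    exact le_iSup₂_of_le (f := fun v _ => ENNReal.ofReal v) a.toReal ⟨hv0, by simp [hf]⟩ le_rfl
  · apply le_csInf
    · have hlim : Tendsto (fun v : ℝ => e0 + v⁻¹ • (y - e0)) atTop (𝓝 e0) := by
        have h := (tendsto_const_nhds (x := e0)).add
          ((tendsto_inv_atTop_zero (𝕜 := ℝ)).smul_const (y - e0))
        rwa [zero_smul, add_zero] at h
      obtain ⟨v, hv, hv0⟩ := ((hlim.eventually (mem_interior_iff_mem_nhds.1 he0)).and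
        (eventually_gt_atTop 0)).exists
      exact ⟨v, hv0, subset_closure hv⟩
    · rintro v ⟨hv0, hv⟩
      have hd := Metric.dist_le_diam_of_mem (Metric.isBounded_iff_ediam_ne_top.2 hD) hv hmem
      rw [dist_eq_norm, add_sub_cancel_left, norm_smul, norm_inv, Real.norm_of_nonneg hv0.le,
        inv_mul_le_iff₀ hv0] at hd
      exact div_le_of_le_mul₀ Metric.diam_nonneg hv0.le hd

end MultiRadial
end
end
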